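/- Let d = 2m ≥ 4 be an even integer and let J be the canonical d×d symplectic form, and set S(O) = J Oᵀ J O for O real orthogonal. Then: (i) for every O ∈ O(d), the entry S(O)_{m,0} = 0; and (ii) for every index x ∈ {0,…,d−1} with x ≠ m, the random variable (S(O)_{x,0})² under the Haar probability measure on O(d) is distributed as Beta(1/2, (d−2)/2), i.e. for every t ∈ [0,1], the Haar measure of {O ∈ O(d) : ((J Oᵀ J O)_{x,0})² ≤ t} equals (∫₀^t s^{−1/2}(1−s)^{(d−4)/2} ds)/B(1/2, (d−2)/2). -/

import Mathlib

open MeasureTheory Matrix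

/-- The entrywise (product) measurable structure on matrices. -/
instance matrixMeasurableSpace {m' n' α : Type*} [MeasurableSpace α] :
    MeasurableSpace (Matrix m' n' α) :=
  (inferInstance : MeasurableSpace (m' → n' → α))

/-- The canonical `2m × 2m` symplectic form `J = [[0, Iₘ],[−Iₘ, 0]]`. -/
noncomputable def sympJ (m : ℕ) (R : Type*) [Ring R] : Matrix (Fin (2 * m)) (Fin (2 * m)) R :=
  Matrix.reindex (finSumFinEquiv.trans (finCongr (two_mul m).symm))
    (finSumFinEquiv.trans (finCongr (two_mul m).symm))
    (Matrix.fromBlocks 0 1 (-1) 0)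

/-- The Beta function `B(a,b) = Γ(a)Γ(b)/Γ(a+b)`. -/
noncomputable def betaFun (a b : ℝ) : ℝ :=
  Real.Gamma a * Real.Gamma b / Real.Gamma (a + b)

/-!
Left multiplication by `J` permutes rows up to sign, so `S(O)_{x,0} = ± (Oᵀ J O)_{y,0}`, where `y` is
the `J`-partner of `x`. For `x = m` this is a diagonal entry of the skew-symmetric matrix `Oᵀ J O`,
hence zero.

For `x ≠ m` one has `y ≠ 0`. The column `w(O) = Oᵀ J O e₀` is a unit vector orthogonal to `e₀`, and
`w(O R) = Rᵀ w(O)` when `R` fixes `e₀`. Haar measure is right-invariant (`haar_right_invariant`), so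
the law of `w` on the unit sphere of `e₀^⊥ ≅ ℝ^{d-1}` is rotation invariant; reflections
(`exists_reflection`) suffice to express this.

The law of one coordinate is found without spherical coordinates (`law_of_invariant_unit_vector`):
Fubini against an auxiliary `g` uniform in the unit ball of `ℝ^{d-1}` identifies the probability of
`w_y² ≤ t` with the fraction of the ball in the double cone `g_y² ≤ t |g|²`. Scaling of Lebesgue
measure (`cone_volume_prod`) shows this fraction to be proportional to
`∫_{u² ≤ t (1 + u²)} (1 + u²)^{-(d-1)/2} du`, and `s = u² / (1 + u²)` turns this into the incomplete
Beta integral (`beta_substitution`). The normalisation is the case `t = 1`.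
-/

/-! ### The symplectic form -/

/-- The splitting of the `2m` indices into the first and the last `m` that underlies `sympJ`. -/
def blockEquiv (m : ℕ) : Fin m ⊕ Fin m ≃ Fin (2 * m) :=
  finSumFinEquiv.trans (finCongr (two_mul m).symm)

lemma blockEquiv_inl_val (m : ℕ) (i : Fin m) : (blockEquiv m (Sum.inl i)).val = i := by
  simp [blockEquiv]

lemma blockEquiv_inr_val (m : ℕ) (i : Fin m) : (blockEquiv m (Sum.inr i)).val = m + i := by
  simp [blockEquiv, add_comm]

lemma sympJ_eq (m : ℕ) : sympJ m ℝ =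
    Matrix.reindex (blockEquiv m) (blockEquiv m) (Matrix.fromBlocks 0 1 (-1) 0) := rfl

lemma sympJ_mul_inl (m : ℕ) (M : Matrix (Fin (2 * m)) (Fin (2 * m)) ℝ) (i : Fin m)
    (z : Fin (2 * m)) :
    (sympJ m ℝ * M) (blockEquiv m (Sum.inl i)) z = M (blockEquiv m (Sum.inr i)) z := by
  rw [Matrix.mul_apply, ← (blockEquiv m).sum_comp]
  simp [sympJ_eq, Fintype.sum_sum_type, Matrix.one_apply]

lemma sympJ_mul_inr (m : ℕ) (M : Matrix (Fin (2 * m)) (Fin (2 * m)) ℝ) (i : Fin m)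
    (z : Fin (2 * m)) :
    (sympJ m ℝ * M) (blockEquiv m (Sum.inr i)) z = - M (blockEquiv m (Sum.inl i)) z := by
  rw [Matrix.mul_apply, ← (blockEquiv m).sum_comp]
  simp [sympJ_eq, Fintype.sum_sum_type, Matrix.one_apply]

lemma sympJ_transpose (m : ℕ) : (sympJ m ℝ)ᵀ = - sympJ m ℝ := by
  ext i j
  obtain ⟨i, rfl⟩ := (blockEquiv m).surjective i
  obtain ⟨j, rfl⟩ := (blockEquiv m).surjective j
  rcases i with i | i <;> rcases j with j | j <;>
    simp [sympJ_eq, Matrix.one_apply, eq_comm]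

lemma sympJ_mul_self (m : ℕ) : sympJ m ℝ * sympJ m ℝ = -1 := by
  ext i j
  obtain ⟨i, rfl⟩ := (blockEquiv m).surjective i
  obtain ⟨j, rfl⟩ := (blockEquiv m).surjective j
  rcases i with i | i
  · rw [sympJ_mul_inl]
    rcases j with j | j <;> simp [sympJ_eq, Matrix.one_apply]
  · rw [sympJ_mul_inr]
    rcases j with j | j <;> simp [sympJ_eq, Matrix.one_apply]

/-- Left multiplication by `J` permutes rows up to sign; row `m` is the only one built from
row `0`. -/
lemma sympJ_row (m : ℕ) (x im i₀ : Fin (2 * m)) (him : im.val = m) (hi₀ : i₀.val = 0)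
    (hx : x ≠ im) :
    ∃ y : Fin (2 * m), y ≠ i₀ ∧ ∀ (M : Matrix (Fin (2 * m)) (Fin (2 * m)) ℝ) z,
      ((sympJ m ℝ * M) x z) ^ 2 = (M y z) ^ 2 := by
  obtain ⟨s, rfl⟩ := (blockEquiv m).surjective x
  rcases s with i | i
  · refine ⟨_, ?_, fun M z => by rw [sympJ_mul_inl]⟩
    intro h
    have h1 := congrArg Fin.val h
    have h2 := i.isLt
    rw [blockEquiv_inr_val, hi₀] at h1
    omega
  · refine ⟨_, ?_, fun M z => by rw [sympJ_mul_inr, neg_sq]⟩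
    intro h
    apply hx
    have h1 := congrArg Fin.val h
    rw [blockEquiv_inl_val, hi₀] at h1
    apply Fin.ext
    rw [blockEquiv_inr_val, him, h1, add_zero]

lemma sympJ_row_partner (m : ℕ) (im i₀ : Fin (2 * m)) (him : im.val = m) (hi₀ : i₀.val = 0)
    (M : Matrix (Fin (2 * m)) (Fin (2 * m)) ℝ) (z : Fin (2 * m)) :
    (sympJ m ℝ * M) im z = - M i₀ z := by
  obtain ⟨s, rfl⟩ := (blockEquiv m).surjective im
  rcases s with i | i
  · have h2 := i.isLt
    rw [blockEquiv_inl_val] at him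
    omega
  · rw [blockEquiv_inr_val] at him
    have h : blockEquiv m (Sum.inl i) = i₀ := by
      apply Fin.ext
      rw [blockEquiv_inl_val, hi₀]
      omega
    rw [sympJ_mul_inr, h]

/-! ### Reflections -/

/-- The Householder reflection exchanging two unit vectors. -/
lemma exists_reflection {ι : Type*} [Fintype ι] [DecidableEq ι] (u v : ι → ℝ)
    (hu : u ⬝ᵥ u = 1) (hv : v ⬝ᵥ v = 1) :
    ∃ R : Matrix ι ι ℝ, Rᵀ = R ∧ R * R = 1 ∧ R *ᵥ u = v ∧
      ∀ z, z ⬝ᵥ u = 0 → z ⬝ᵥ v = 0 → R *ᵥ z = z := by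
  by_cases h : u = v
  · exact ⟨1, by simp, by simp, by simp [h], by simp⟩
  have hne : (u - v) ⬝ᵥ (u - v) ≠ 0 := by
    rwa [Ne, dotProduct_self_eq_zero, sub_eq_zero]
  have hc : v ⬝ᵥ u = u ⬝ᵥ v := dotProduct_comm _ _
  have hd : (u - v) ⬝ᵥ (u - v) = 2 * ((u - v) ⬝ᵥ u) := by
    simp only [sub_dotProduct, dotProduct_sub, hu, hv, hc]; ring
  set q := u - v with hq
  have hvm : ∀ z, (1 - (2 / (q ⬝ᵥ q)) • vecMulVec q q) *ᵥ z
      = z - (2 / (q ⬝ᵥ q) * (q ⬝ᵥ z)) • q := by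
    intro z
    rw [sub_mulVec, one_mulVec, smul_mulVec, vecMulVec_mulVec]
    ext i; simp; ring
  refine ⟨1 - (2 / (q ⬝ᵥ q)) • vecMulVec q q, ?_, ?_, ?_, ?_⟩
  · simp [transpose_vecMulVec]
  · simp only [sub_mul, mul_sub, one_mul, mul_one, smul_mul_smul_comm, vecMulVec_mul_vecMulVec]
    ext i j
    simp [vecMulVec_apply]
    field_simp
    ring
  · rw [hvm]
    have : 2 / (q ⬝ᵥ q) * (q ⬝ᵥ u) = 1 := by
      rw [div_mul_eq_mul_div, ← hd, div_self hne]
    rw [this, hq]; simp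
  · intro z h1 h2
    rw [hvm]
    have : q ⬝ᵥ z = 0 := by
      rw [hq, sub_dotProduct, dotProduct_comm, h1, dotProduct_comm, h2]; simp
    simp [this]

lemma map_reflection_volume {ι : Type*} [Fintype ι] [DecidableEq ι] (R : Matrix ι ι ℝ)
    (h2 : R * R = 1) : MeasurePreserving (fun g : ι → ℝ => R *ᵥ g) volume volume := by
  have hdet : R.det * R.det = 1 := by rw [← det_mul, h2, det_one]
  have h0 : R.det ≠ 0 := by rintro h; simp [h] at hdet
  have habs : |(R.det)⁻¹| = 1 := by
    rcases mul_self_eq_one_iff.1 hdet with h | h <;> simp [h]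
  refine ⟨by fun_prop, ?_⟩
  have := Real.map_matrix_volume_pi_eq_smul_volume_pi h0
  rw [habs, ENNReal.ofReal_one, one_smul] at this
  exact this

/-! ### Volumes of cones in the unit ball -/

lemma slice_volume (A : Set ℝ) (r : ℝ) (hr : 0 < r) :
    volume {a : ℝ | a ^ 2 + r ^ 2 ≤ 1 ∧ a / r ∈ A} =
      ENNReal.ofReal r * volume {u : ℝ | r ^ 2 * (1 + u ^ 2) ≤ 1 ∧ u ∈ A} := by
  have hset : {a : ℝ | a ^ 2 + r ^ 2 ≤ 1 ∧ a / r ∈ A} =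
      (fun a => r⁻¹ * a) ⁻¹' {u : ℝ | r ^ 2 * (1 + u ^ 2) ≤ 1 ∧ u ∈ A} := by
    ext a
    have e : r ^ 2 * (1 + (r⁻¹ * a) ^ 2) = a ^ 2 + r ^ 2 := by field_simp; ring
    simp only [Set.mem_ofPred_eq, Set.mem_preimage, e]
    rw [div_eq_inv_mul]
  rw [hset, Real.volume_preimage_mul_left (inv_ne_zero hr.ne'), inv_inv, abs_of_pos hr]

lemma lintegral_smul_scale {κ : Type*} [Fintype κ] (f : (κ → ℝ) → ENNReal)
    (hf : Measurable f) (s : ℝ) (hs : 0 < s) :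
    ∫⁻ b, f b = ENNReal.ofReal (s ^ Fintype.card κ) * ∫⁻ z, f (s • z) := by
  have h := Measure.map_addHaar_smul (volume : Measure (κ → ℝ)) hs.ne'
  have h2 : ∫⁻ z, f (s • z) = ∫⁻ b, f b ∂(Measure.map (s • ·) (volume : Measure (κ → ℝ))) := by
    rw [lintegral_map hf (by fun_prop)]
  rw [h2, h, lintegral_smul_measure, smul_eq_mul, ← mul_assoc, ← ENNReal.ofReal_mul (by positivity),
    Module.finrank_fintype_fun_eq_card, abs_of_pos (by positivity), mul_inv_cancel₀ (by positivity)]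
  simp

lemma measurableSet_cone {κ : Type*} [Fintype κ] {A : Set ℝ} (hA : MeasurableSet A) :
    MeasurableSet
      {p : ℝ × (κ → ℝ) | p.1 ^ 2 + p.2 ⬝ᵥ p.2 ≤ 1 ∧ p.1 / √(p.2 ⬝ᵥ p.2) ∈ A} := by
  have hdot : Measurable (fun b : κ → ℝ => b ⬝ᵥ b) := by
    simp only [dotProduct]; fun_prop
  have h1 : MeasurableSet {p : ℝ × (κ → ℝ) | p.1 ^ 2 + p.2 ⬝ᵥ p.2 ≤ 1} :=
    measurableSet_le ((measurable_fst.pow_const 2).add (hdot.comp measurable_snd))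
      measurable_const
  exact h1.inter ((measurable_fst.div (hdot.comp measurable_snd).sqrt) hA)

/-- With `r = |b|`, substitute `a = r u` and then `b = (1 + u²)^{-1/2} z`: the volume of the part of
the unit ball of `ℝ × ℝ^κ` on which the slope `a / |b|` lies in `A` is a multiple of the mass of `A`
for the density `(1 + u²)^{-(|κ|+1)/2}`, with the factor `∫_{|z| ≤ 1} |z| dz`. -/
lemma cone_volume_prod {κ : Type*} [Fintype κ] [Nonempty κ] :
    ∃ C : ENNReal, ∀ A : Set ℝ, MeasurableSet A →
      volume {p : ℝ × (κ → ℝ) | p.1 ^ 2 + p.2 ⬝ᵥ p.2 ≤ 1 ∧ p.1 / √(p.2 ⬝ᵥ p.2) ∈ A} =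
        C * ∫⁻ u in A, ENNReal.ofReal ((1 + u ^ 2) ^ (-((Fintype.card κ : ℝ) + 1) / 2)) := by
  classical
  let f : (κ → ℝ) → ENNReal := fun b =>
    Set.indicator {b : κ → ℝ | b ⬝ᵥ b ≤ 1} (fun b => ENNReal.ofReal √(b ⬝ᵥ b)) b
  have hdot : Measurable (fun b : κ → ℝ => b ⬝ᵥ b) := by
    simp only [dotProduct]; fun_prop
  have hf : Measurable f :=
    Measurable.indicator (by fun_prop) (measurableSet_le hdot measurable_const)
  refine ⟨∫⁻ z, f z, fun A hA => ?_⟩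
  have hmeas := measurableSet_cone (κ := κ) hA
  rw [Measure.volume_eq_prod, Measure.prod_apply_symm hmeas]
  let F : (κ → ℝ) → ℝ → ENNReal := fun b u =>
    Set.indicator {q : (κ → ℝ) × ℝ | (q.1 ⬝ᵥ q.1) * (1 + q.2 ^ 2) ≤ 1}
      (fun q => ENNReal.ofReal √(q.1 ⬝ᵥ q.1)) (b, u)
  have hFset : MeasurableSet {q : (κ → ℝ) × ℝ | (q.1 ⬝ᵥ q.1) * (1 + q.2 ^ 2) ≤ 1} :=
    measurableSet_le ((hdot.comp measurable_fst).mul (by fun_prop)) measurable_const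
  have hF : Measurable (Function.uncurry F) :=
    Measurable.indicator (f := fun q : (κ → ℝ) × ℝ => ENNReal.ofReal √(q.1 ⬝ᵥ q.1))
      (hdot.comp measurable_fst).sqrt.ennreal_ofReal hFset
  have hslice : ∀ᵐ b : κ → ℝ, volume ((fun a => (a, b)) ⁻¹'
      {p : ℝ × (κ → ℝ) | p.1 ^ 2 + p.2 ⬝ᵥ p.2 ≤ 1 ∧ p.1 / √(p.2 ⬝ᵥ p.2) ∈ A}) =
      ∫⁻ u in A, F b u := by
    have hz : ∀ᵐ b : κ → ℝ, b ≠ 0 := by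
      rw [ae_iff]; simp
    filter_upwards [hz] with b hb
    have hpos : 0 < b ⬝ᵥ b := by
      rcases (show 0 ≤ b ⬝ᵥ b from Finset.sum_nonneg fun i _ => mul_self_nonneg _).lt_or_eq
        with h | h
      · exact h
      · exact absurd (dotProduct_self_eq_zero.1 h.symm) hb
    have hsq : √(b ⬝ᵥ b) ^ 2 = b ⬝ᵥ b := Real.sq_sqrt hpos.le
    have := slice_volume A (√(b ⬝ᵥ b)) (Real.sqrt_pos.2 hpos)
    rw [hsq] at this
    simp only [Set.preimage_ofPred_eq]
    rw [this]
    have hFb : ∀ u, F b u = Set.indicator {u : ℝ | (b ⬝ᵥ b) * (1 + u ^ 2) ≤ 1}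
        (fun _ => ENNReal.ofReal √(b ⬝ᵥ b)) u := fun u => by
      simp only [F, Set.indicator_apply, Set.mem_ofPred_eq]
    have hms : MeasurableSet {u : ℝ | (b ⬝ᵥ b) * (1 + u ^ 2) ≤ 1} :=
      measurableSet_le (by fun_prop) measurable_const
    simp only [hFb]
    rw [lintegral_indicator_const hms, Measure.restrict_apply hms]
    rfl
  rw [lintegral_congr_ae hslice, lintegral_lintegral_swap hF.aemeasurable,
    ← lintegral_const_mul _ (by fun_prop)]
  refine lintegral_congr fun u => ?_
  have hu : 0 < 1 + u ^ 2 := by positivity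
  have hs : 0 < (√(1 + u ^ 2))⁻¹ := by positivity
  have hs2 : ((√(1 + u ^ 2))⁻¹) ^ 2 = (1 + u ^ 2)⁻¹ := by
    rw [inv_pow, Real.sq_sqrt hu.le]
  have hFu : Measurable fun b => F b u := hF.comp (measurable_id.prodMk measurable_const)
  rw [lintegral_smul_scale _ hFu _ hs]
  have hpt : ∀ z, F ((√(1 + u ^ 2))⁻¹ • z) u = ENNReal.ofReal ((√(1 + u ^ 2))⁻¹) * f z := by
    intro z
    have e : (((√(1 + u ^ 2))⁻¹ • z) ⬝ᵥ ((√(1 + u ^ 2))⁻¹ • z)) =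
        (1 + u ^ 2)⁻¹ * (z ⬝ᵥ z) := by
      rw [smul_dotProduct, dotProduct_smul, smul_eq_mul, smul_eq_mul, ← mul_assoc, ← sq, hs2]
    have e2 : (1 + u ^ 2)⁻¹ * (z ⬝ᵥ z) * (1 + u ^ 2) = z ⬝ᵥ z := by field_simp
    simp only [F, f, Set.indicator_apply, Set.mem_ofPred_eq, e, e2]
    split_ifs
    · rw [Real.sqrt_mul (by positivity), Real.sqrt_inv, ENNReal.ofReal_mul (by positivity)]
    · simp
  simp only [hpt]
  rw [lintegral_const_mul _ hf, ← mul_assoc, ← ENNReal.ofReal_mul (by positivity), mul_comm]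
  congr 2
  rw [← pow_succ, Real.sqrt_eq_rpow, ← Real.rpow_neg hu.le, ← Real.rpow_natCast,
    ← Real.rpow_mul hu.le]
  congr 1
  push_cast
  ring

/-- The part of the unit ball of `ℝ^ι` in the double cone `g_y² ≤ t |g|²`; the constant does not
depend on the aperture `t`. -/
lemma cone_volume {ι : Type*} [Fintype ι] [DecidableEq ι] [Nontrivial ι] (y : ι) :
    ∃ C : ENNReal, ∀ t : ℝ,
      volume {g : ι → ℝ | g ⬝ᵥ g ≤ 1 ∧ g y ^ 2 ≤ t * (g ⬝ᵥ g)} =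
        C * ∫⁻ u in {u : ℝ | u ^ 2 ≤ t * (1 + u ^ 2)},
          ENNReal.ofReal ((1 + u ^ 2) ^ (-(Fintype.card ι : ℝ) / 2)) := by
  obtain ⟨z, hz⟩ := exists_ne y
  have : Nonempty {j : ι // ¬ j = y} := ⟨⟨z, hz⟩⟩
  obtain ⟨C, hC⟩ := cone_volume_prod (κ := {j : ι // ¬ j = y})
  refine ⟨C, fun t => ?_⟩
  have hcard : ((Fintype.card {j : ι // ¬ j = y} : ℝ) + 1) = Fintype.card ι := by
    have := Fintype.card_subtype_compl (fun j => j = y)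
    have h1 : 0 < Fintype.card ι := Fintype.card_pos_iff.2 ⟨y⟩
    rw [Fintype.card_subtype_eq] at this
    rw [this, Nat.cast_sub h1]; simp
  have hA : MeasurableSet {u : ℝ | u ^ 2 ≤ t * (1 + u ^ 2)} :=
    measurableSet_le (by fun_prop) (by fun_prop)
  have h := hC _ hA
  rw [hcard] at h
  rw [← h]
  have hΦ : MeasurePreserving
      (fun g : ι → ℝ => ((g y, fun j => g j) : ℝ × ({j : ι // ¬ j = y} → ℝ)))
      volume volume := by
    have h1 := volume_preserving_piEquivPiSubtypeProd (fun _ : ι => ℝ) (fun j => j = y)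
    have h0 := volume_preserving_funUnique {j : ι // j = y} ℝ
    rw [Subsingleton.elim Unique.fintype (Subtype.fintype fun j => j = y)] at h0
    have h2 := h0.prod
      (MeasurePreserving.id (volume : Measure ({j : ι // ¬ j = y} → ℝ)))
    rw [← Measure.volume_eq_prod, ← Measure.volume_eq_prod] at h2
    exact h2.comp h1
  have hdot : ∀ g : ι → ℝ, g ⬝ᵥ g = g y ^ 2 +
      (fun j : {j : ι // ¬ j = y} => g j) ⬝ᵥ (fun j : {j : ι // ¬ j = y} => g j) := by
    intro g
    simp only [dotProduct]
    rw [Fintype.sum_eq_add_sum_subtype_ne (fun i => g i * g i) y, sq]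
  have hmeas := measurableSet_cone (κ := {j : ι // ¬ j = y}) hA
  rw [← hΦ.measure_preimage hmeas.nullMeasurableSet]
  apply measure_congr
  have hzae : ∀ᵐ g : ι → ℝ, g z ≠ 0 :=
    Measure.ae_eval_ne (fun _ : ι => (volume : Measure ℝ)) z 0
  filter_upwards [hzae] with g hg
  have hpos : 0 < (fun j : {j : ι // ¬ j = y} => g j) ⬝ᵥ
      (fun j : {j : ι // ¬ j = y} => g j) :=
    Finset.sum_pos' (fun i _ => mul_self_nonneg _)
      ⟨⟨z, hz⟩, Finset.mem_univ _, mul_self_pos.2 hg⟩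
  apply propext
  change (_ ∧ _) ↔ (_ ∧ _)
  rw [hdot g]
  refine and_congr Iff.rfl ?_
  rw [div_pow, Real.sq_sqrt hpos.le]
  generalize (fun j : {j : ι // ¬ j = y} => g j) ⬝ᵥ (fun j : {j : ι // ¬ j = y} => g j) = r at *
  rw [← mul_le_mul_iff_of_pos_right hpos (b := g y ^ 2 / r)]
  have e1 : g y ^ 2 / r * r = g y ^ 2 := by field_simp
  have e2 : t * (1 + g y ^ 2 / r) * r = t * (g y ^ 2 + r) := by field_simp; ring
  rw [e1, e2]

/-! ### The Beta integral -/

/-- The substitution `s = u² / (1 + u²)`, applied to the half-line `u > 0` (the integrand is even). The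
case `t = 1` is the whole line. -/
lemma beta_substitution (c t : ℝ) (ht1 : t ≤ 1) :
    ∫⁻ u in {u : ℝ | u ^ 2 ≤ t * (1 + u ^ 2)}, ENNReal.ofReal ((1 + u ^ 2) ^ (-c / 2)) =
      ∫⁻ s in Set.Ioo (0 : ℝ) t,
        ENNReal.ofReal (s ^ (-(1 : ℝ) / 2) * (1 - s) ^ ((c - 3) / 2)) := by
  set A : Set ℝ := {u : ℝ | u ^ 2 ≤ t * (1 + u ^ 2)} with hAdef
  have hA : MeasurableSet A := measurableSet_le (by fun_prop) (by fun_prop)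
  set w : ℝ → ENNReal := fun u => ENNReal.ofReal ((1 + u ^ 2) ^ (-c / 2)) with hw
  have hsplit : ∫⁻ u in A, w u = ∫⁻ u in A ∩ Set.Ioi 0, 2 * w u := by
    have h1 : ∫⁻ u in A, w u =
        (∫⁻ u in A ∩ Set.Ioi 0, w u) + ∫⁻ u in A ∩ Set.Iio 0, w u := by
      rw [← lintegral_inter_add_sdiff w A (measurableSet_Ioi (a := (0 : ℝ)))]
      congr 1
      apply setLIntegral_congr
      have h0 : ∀ᵐ u : ℝ, u ≠ 0 := by rw [ae_iff]; simp
      filter_upwards [h0] with u hu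
      apply propext
      change (u ∈ A ∧ ¬ (0 < u)) ↔ (u ∈ A ∧ u < 0)
      refine and_congr Iff.rfl ⟨fun h => lt_of_le_of_ne (not_lt.1 h) hu, fun h => h.not_gt⟩
    have h2 : ∫⁻ u in A ∩ Set.Iio 0, w u = ∫⁻ u in A ∩ Set.Ioi 0, w u := by
      have hp := (Measure.measurePreserving_neg (volume : Measure ℝ)).setLIntegral_comp_preimage_emb
        (MeasurableEquiv.neg ℝ).measurableEmbedding w (A ∩ Set.Iio 0)
      rw [← hp]
      have hs : Neg.neg ⁻¹' (A ∩ Set.Iio (0 : ℝ)) = A ∩ Set.Ioi 0 := by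
        ext u; simp [hAdef]
      simp only [hs, hw, neg_sq]
    rw [h1, h2, ← two_mul, lintegral_const_mul]
    fun_prop
  rw [hsplit]
  have himg : (fun u : ℝ => u ^ 2 / (1 + u ^ 2)) '' (A ∩ Set.Ioi 0) =
      Set.Ioc 0 t ∩ Set.Iio 1 := by
    ext s
    constructor
    · rintro ⟨u, ⟨hu, hu0⟩, rfl⟩
      have hu0 : 0 < u := hu0
      have hu : u ^ 2 ≤ t * (1 + u ^ 2) := hu
      refine ⟨⟨by positivity, ?_⟩, ?_⟩
      · exact (div_le_iff₀ (by positivity)).2 hu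
      · change _ < (1 : ℝ)
        rw [div_lt_one (by positivity)]; linarith
    · rintro ⟨⟨h0, h1⟩, h2⟩
      have h2 : s < 1 := h2
      have h3 : 0 < 1 - s := by linarith
      have hsq : √(s / (1 - s)) ^ 2 = s / (1 - s) := Real.sq_sqrt (by positivity)
      have e : 1 + s / (1 - s) = 1 / (1 - s) := by field_simp; ring
      refine ⟨√(s / (1 - s)), ⟨?_, ?_⟩, ?_⟩
      · change _ ^ 2 ≤ t * (1 + _ ^ 2)
        rw [hsq, e, mul_one_div]
        gcongr
      · exact Real.sqrt_pos.2 (by positivity)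
      · change _ ^ 2 / (1 + _ ^ 2) = s
        rw [hsq, e]; field_simp
  have hae : (Set.Ioo 0 t : Set ℝ) =ᵐ[volume] (Set.Ioc 0 t ∩ Set.Iio 1 : Set ℝ) := by
    have h0 : ∀ᵐ s : ℝ, s ≠ t := by rw [ae_iff]; simp
    filter_upwards [h0] with s hs
    apply propext
    change (0 < s ∧ s < t) ↔ ((0 < s ∧ s ≤ t) ∧ s < 1)
    constructor
    · rintro ⟨h1, h2⟩; exact ⟨⟨h1, h2.le⟩, by linarith⟩
    · rintro ⟨⟨h1, h2⟩, -⟩; exact ⟨h1, lt_of_le_of_ne h2 hs⟩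
  have hinj : Set.InjOn (fun u : ℝ => u ^ 2 / (1 + u ^ 2)) (A ∩ Set.Ioi 0) := by
    rintro u ⟨-, hu⟩ v ⟨-, hv⟩ h
    have hu : 0 < u := hu
    have hv : 0 < v := hv
    change u ^ 2 / (1 + u ^ 2) = v ^ 2 / (1 + v ^ 2) at h
    rw [div_eq_div_iff (by positivity) (by positivity)] at h
    have : u ^ 2 = v ^ 2 := by linarith
    exact (pow_left_inj₀ hu.le hv.le two_ne_zero).1 this
  have hder : ∀ u ∈ A ∩ Set.Ioi 0, HasDerivWithinAt (fun u : ℝ => u ^ 2 / (1 + u ^ 2))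
      (2 * u / (1 + u ^ 2) ^ 2) (A ∩ Set.Ioi 0) u := by
    intro u _
    have h1 : HasDerivAt (fun u : ℝ => u ^ 2) (2 * u) u := by
      simpa using hasDerivAt_pow 2 u
    have h2 := h1.div (h1.const_add 1) (by positivity : (1 + u ^ 2) ≠ 0)
    refine HasDerivAt.hasDerivWithinAt ?_
    refine h2.congr_deriv ?_
    field_simp
    ring
  rw [setLIntegral_congr hae, ← himg, lintegral_image_eq_lintegral_abs_deriv_mul
    (hA.inter measurableSet_Ioi) hder hinj]
  refine setLIntegral_congr_fun (hA.inter measurableSet_Ioi) ?_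
  rintro u ⟨-, hu⟩
  have hu : 0 < u := hu
  have hp : 0 < 1 + u ^ 2 := by positivity
  change 2 * ENNReal.ofReal _ = ENNReal.ofReal |2 * u / (1 + u ^ 2) ^ 2| * ENNReal.ofReal _
  rw [← ENNReal.ofReal_mul (by positivity), abs_of_pos (by positivity),
    show (2 : ENNReal) = ENNReal.ofReal 2 by simp, ← ENNReal.ofReal_mul (by positivity)]
  congr 1
  have e1 : 1 - u ^ 2 / (1 + u ^ 2) = (1 + u ^ 2)⁻¹ := by field_simp; ring
  have e2 : (u ^ 2 / (1 + u ^ 2)) ^ (-(1 : ℝ) / 2) = u⁻¹ * (1 + u ^ 2) ^ ((1 : ℝ) / 2) := by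
    have hu2 : (u ^ 2) ^ (-(1 : ℝ) / 2) = u⁻¹ := by
      rw [← Real.rpow_natCast u 2, ← Real.rpow_mul hu.le]
      norm_num
      rw [Real.rpow_neg_one]
    rw [Real.div_rpow (by positivity) hp.le, hu2, neg_div, Real.rpow_neg hp.le, div_inv_eq_mul]
  have e3 : (1 + u ^ 2) ^ 2 = (1 + u ^ 2) ^ (2 : ℝ) := by
    rw [← Real.rpow_natCast]; norm_num
  rw [e1, e2, e3, Real.inv_rpow hp.le, ← Real.rpow_neg hp.le, div_eq_mul_inv (2 * u),
    ← Real.rpow_neg hp.le]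
  have e4 : (1 + u ^ 2) ^ (-c / 2) = (1 + u ^ 2) ^ (-2 : ℝ) * ((1 + u ^ 2) ^ ((1 : ℝ) / 2) *
      (1 + u ^ 2) ^ (-((c - 3) / 2))) := by
    rw [← Real.rpow_add hp, ← Real.rpow_add hp]; congr 1; ring
  rw [e4]
  field_simp

lemma lintegral_beta (b : ℝ) (hb : 0 < b) :
    ∫⁻ s in Set.Ioo (0 : ℝ) 1,
        ENNReal.ofReal (s ^ (-(1 : ℝ) / 2) * (1 - s) ^ (b - 1)) =
      ENNReal.ofReal (betaFun (1 / 2) b) := by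
  have h := ProbabilityTheory.lintegral_betaPDF_eq_one (α := 1 / 2) (β := b) (by norm_num) hb
  have hpos : 0 < betaFun (1 / 2) b := ProbabilityTheory.beta_pos (by norm_num) hb
  rw [ProbabilityTheory.lintegral_betaPDF] at h
  change ∫⁻ x in Set.Ioo (0 : ℝ) 1, ENNReal.ofReal (1 / betaFun (1 / 2) b * _ * _) = 1 at h
  have e : ∀ x : ℝ, ENNReal.ofReal (1 / betaFun (1 / 2) b * x ^ ((1 : ℝ) / 2 - 1) *
      (1 - x) ^ (b - 1)) = ENNReal.ofReal (1 / betaFun (1 / 2) b) *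
        ENNReal.ofReal (x ^ (-(1 : ℝ) / 2) * (1 - x) ^ (b - 1)) := by
    intro x
    rw [← ENNReal.ofReal_mul (by positivity), mul_assoc]
    norm_num
  simp only [e] at h
  rw [lintegral_const_mul _ (by fun_prop)] at h
  rw [one_div (betaFun _ _), ENNReal.ofReal_inv_of_pos hpos] at h
  rw [mul_comm] at h
  rw [ENNReal.eq_inv_of_mul_eq_one_left h, inv_inv]

/-! ### Coordinates of a rotation-invariant unit vector -/

/-- The volume of the double cone around a unit vector `w` inside the ball does not depend on `w`. -/
lemma volume_cone_rotate {ι : Type*} [Fintype ι] [DecidableEq ι] (w : ι → ℝ)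
    (hw : w ⬝ᵥ w = 1) (y : ι) (t : ℝ) :
    volume {g : ι → ℝ | g ⬝ᵥ g ≤ 1 ∧ (g ⬝ᵥ w) ^ 2 ≤ t * (g ⬝ᵥ g)} =
      volume {g : ι → ℝ | g ⬝ᵥ g ≤ 1 ∧ g y ^ 2 ≤ t * (g ⬝ᵥ g)} := by
  obtain ⟨R, hRt, hRR, hRw, -⟩ := exists_reflection w (Pi.single y 1) hw (by simp)
  have hdot : Measurable (fun g : ι → ℝ => g ⬝ᵥ g) := by simp only [dotProduct]; fun_prop
  have h1 : MeasurableSet {g : ι → ℝ | g ⬝ᵥ g ≤ 1} := measurableSet_le hdot measurable_const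
  have h2 : MeasurableSet {g : ι → ℝ | g y ^ 2 ≤ t * (g ⬝ᵥ g)} :=
    measurableSet_le (by fun_prop) (hdot.const_mul t)
  have h3 : MeasurableSet {g : ι → ℝ | g ⬝ᵥ g ≤ 1 ∧ g y ^ 2 ≤ t * (g ⬝ᵥ g)} := h1.inter h2
  rw [← (map_reflection_volume R hRR).measure_preimage h3.nullMeasurableSet]
  congr 1
  ext g
  have e1 : (R *ᵥ g) ⬝ᵥ (R *ᵥ g) = g ⬝ᵥ g := by
    rw [dotProduct_mulVec, ← mulVec_transpose, hRt, mulVec_mulVec, hRR, one_mulVec]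
  have e2 : (R *ᵥ g) y = g ⬝ᵥ w := by
    have : w = R *ᵥ (Pi.single y 1) := by rw [← hRw, mulVec_mulVec, hRR, one_mulVec]
    rw [this, dotProduct_mulVec, ← mulVec_transpose, hRt, dotProduct_single, mul_one]
  simp only [Set.mem_ofPred_eq, Set.mem_preimage, e1, e2]

lemma volume_unitBall_ne {ι : Type*} [Fintype ι] :
    volume {g : ι → ℝ | g ⬝ᵥ g ≤ 1} ≠ 0 ∧ volume {g : ι → ℝ | g ⬝ᵥ g ≤ 1} ≠ ⊤ := by
  have hc : Continuous (fun g : ι → ℝ => g ⬝ᵥ g) := by simp only [dotProduct]; fun_prop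
  constructor
  · have ho : IsOpen {g : ι → ℝ | g ⬝ᵥ g < 1} := isOpen_lt hc continuous_const
    have hpos := ho.measure_pos volume ⟨0, by simp⟩
    exact (hpos.trans_le (measure_mono fun g (hg : g ⬝ᵥ g < 1) => hg.le)).ne'
  · have hsub : {g : ι → ℝ | g ⬝ᵥ g ≤ 1} ⊆ Metric.closedBall 0 1 := by
      intro g hg
      have hg : g ⬝ᵥ g ≤ 1 := hg
      rw [mem_closedBall_zero_iff, pi_norm_le_iff_of_nonneg zero_le_one]
      intro i
      have : g i * g i ≤ g ⬝ᵥ g :=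
        Finset.single_le_sum (f := fun i => g i * g i) (fun i _ => mul_self_nonneg _)
          (Finset.mem_univ i)
      rw [Real.norm_eq_abs, ← abs_one, ← sq_le_sq]
      nlinarith
    exact ((measure_mono hsub).trans_lt measure_closedBall_lt_top).ne

/-- If the projections of a random unit vector `W` on all unit vectors `v` have the same law as its
coordinate `W_y`, then `W_y²` is `Beta(1/2, (n-1)/2)`-distributed, `n = |ι|`. The volume of
`{(g, ω) : |g| ≤ 1, ⟨g, W ω⟩² ≤ t |g|²}` is evaluated by Fubini in both orders: for fixed `g` by
the hypothesis, for fixed `ω` by the rotation invariance of Lebesgue measure. -/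
lemma law_of_invariant_unit_vector {ι : Type*} [Fintype ι] [DecidableEq ι] [Nontrivial ι]
    {Ω : Type*} [MeasurableSpace Ω] (μ : Measure Ω) [IsProbabilityMeasure μ]
    (W : Ω → ι → ℝ) (hW : Measurable W) (hunit : ∀ ω, W ω ⬝ᵥ W ω = 1) (y : ι)
    (hinv : ∀ v : ι → ℝ, v ⬝ᵥ v = 1 → ∀ t : ℝ,
      μ {ω | (v ⬝ᵥ W ω) ^ 2 ≤ t} = μ {ω | (W ω y) ^ 2 ≤ t})
    (t : ℝ) (ht1 : t ≤ 1) :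
    (μ {ω | (W ω y) ^ 2 ≤ t}).toReal =
      (∫ s in Set.Ioo (0 : ℝ) t,
        s ^ (-(1 : ℝ) / 2) * (1 - s) ^ (((Fintype.card ι : ℝ) - 3) / 2)) /
        betaFun (1 / 2) (((Fintype.card ι : ℝ) - 1) / 2) := by
  obtain ⟨C, hC⟩ := cone_volume y
  set B : Set (ι → ℝ) := {g | g ⬝ᵥ g ≤ 1} with hB
  have hdot : Measurable (fun g : ι → ℝ => g ⬝ᵥ g) := by simp only [dotProduct]; fun_prop
  have hBm : MeasurableSet B := measurableSet_le hdot measurable_const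
  have hcard : (1 : ℝ) < Fintype.card ι := by exact_mod_cast Fintype.one_lt_card
  have hb : 0 < ((Fintype.card ι : ℝ) - 1) / 2 := by linarith
  have hbeta : 0 < betaFun (1 / 2) (((Fintype.card ι : ℝ) - 1) / 2) :=
    ProbabilityTheory.beta_pos (by norm_num) hb
  -- the whole ball is the cone of parameter `1`
  have hvolB : volume B =
      C * ENNReal.ofReal (betaFun (1 / 2) (((Fintype.card ι : ℝ) - 1) / 2)) := by
    rw [← lintegral_beta _ hb,
      show ((Fintype.card ι : ℝ) - 1) / 2 - 1 = ((Fintype.card ι : ℝ) - 3) / 2 by ring,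
      ← beta_substitution _ 1 le_rfl, ← hC 1]
    congr 1
    ext g
    simp only [hB, Set.mem_ofPred_eq, one_mul]
    refine ⟨fun h => ⟨h, ?_⟩, fun h => h.1⟩
    rw [sq]
    exact Finset.single_le_sum (f := fun i => g i * g i) (fun i _ => mul_self_nonneg _)
      (Finset.mem_univ y)
  have hvolt := hC t
  rw [beta_substitution _ t ht1] at hvolt
  have hpair : Measurable (fun p : (ι → ℝ) × Ω => p.1 ⬝ᵥ W p.2) := by
    simp only [dotProduct]; fun_prop
  have hset : MeasurableSet {p : (ι → ℝ) × Ω | (p.1 ⬝ᵥ W p.2) ^ 2 ≤ t * (p.1 ⬝ᵥ p.1)} :=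
    measurableSet_le (hpair.pow_const 2) ((hdot.comp measurable_fst).const_mul t)
  have hfub1 := Measure.prod_apply (μ := volume.restrict B) (ν := μ) hset
  have hfub2 := Measure.prod_apply_symm (μ := volume.restrict B) (ν := μ) hset
  have hleft : ∫⁻ g in B, μ (Prod.mk g ⁻¹' {p : (ι → ℝ) × Ω |
      (p.1 ⬝ᵥ W p.2) ^ 2 ≤ t * (p.1 ⬝ᵥ p.1)}) = μ {ω | (W ω y) ^ 2 ≤ t} * volume B := by
    rw [← setLIntegral_const]
    have hz : ∀ᵐ g : ι → ℝ, g ≠ 0 := by rw [ae_iff]; simp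
    refine lintegral_congr_ae ?_
    filter_upwards [ae_restrict_of_ae hz] with g hg
    have hpos : 0 < g ⬝ᵥ g := by
      rcases (show 0 ≤ g ⬝ᵥ g from Finset.sum_nonneg fun i _ => mul_self_nonneg _).lt_or_eq
        with h | h
      · exact h
      · exact absurd (dotProduct_self_eq_zero.1 h.symm) hg
    have hr : 0 < √(g ⬝ᵥ g) := Real.sqrt_pos.2 hpos
    have hsq : √(g ⬝ᵥ g) ^ 2 = g ⬝ᵥ g := Real.sq_sqrt hpos.le
    rw [← hinv ((√(g ⬝ᵥ g))⁻¹ • g) ?_ t]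
    · congr 1
      ext ω
      simp only [Set.mem_preimage, Set.mem_ofPred_eq, smul_dotProduct, smul_eq_mul]
      rw [mul_pow, inv_pow, hsq, inv_mul_le_iff₀ hpos, mul_comm t]
    · rw [smul_dotProduct, dotProduct_smul, smul_eq_mul, smul_eq_mul, ← mul_assoc, ← sq, inv_pow,
        hsq, inv_mul_cancel₀ hpos.ne']
  have hright : ∫⁻ ω, (volume.restrict B) ((fun g => (g, ω)) ⁻¹' {p : (ι → ℝ) × Ω |
      (p.1 ⬝ᵥ W p.2) ^ 2 ≤ t * (p.1 ⬝ᵥ p.1)}) ∂μ =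
      volume {g : ι → ℝ | g ⬝ᵥ g ≤ 1 ∧ g y ^ 2 ≤ t * (g ⬝ᵥ g)} := by
    have : ∀ ω, (volume.restrict B) ((fun g => (g, ω)) ⁻¹' {p : (ι → ℝ) × Ω |
      (p.1 ⬝ᵥ W p.2) ^ 2 ≤ t * (p.1 ⬝ᵥ p.1)}) =
      volume {g : ι → ℝ | g ⬝ᵥ g ≤ 1 ∧ g y ^ 2 ≤ t * (g ⬝ᵥ g)} := by
      intro ω
      rw [Measure.restrict_apply (measurable_prodMk_right hset),
        ← volume_cone_rotate (W ω) (hunit ω) y t]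
      congr 1
      ext g
      exact and_comm
    simp only [this]
    simp
  have hkey : μ {ω | (W ω y) ^ 2 ≤ t} * volume B =
      volume {g : ι → ℝ | g ⬝ᵥ g ≤ 1 ∧ g y ^ 2 ≤ t * (g ⬝ᵥ g)} := by
    rw [← hleft, ← hright, ← hfub1, ← hfub2]
  rw [hvolt, hvolB] at hkey
  obtain ⟨hB0, hBtop⟩ := volume_unitBall_ne (ι := ι)
  rw [← hB, hvolB] at hB0 hBtop
  have hC0 : C ≠ 0 := fun h => hB0 (by simp [h])
  have hCtop : C ≠ ⊤ := fun h => hBtop (by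
    rw [h, ENNReal.top_mul]; simpa using hbeta)
  rw [mul_left_comm, ENNReal.mul_right_inj hC0 hCtop] at hkey
  rw [eq_div_iff hbeta.ne']
  rw [integral_eq_lintegral_of_nonneg_ae, ← hkey, ENNReal.toReal_mul,
    ENNReal.toReal_ofReal hbeta.le]
  · refine ae_restrict_of_forall_mem measurableSet_Ioo fun s hs => ?_
    have : 0 < s := hs.1
    have : 0 < 1 - s := by linarith [hs.2]
    change (0 : ℝ) ≤ _
    positivity
  · exact Measurable.aestronglyMeasurable (by fun_prop)

/-! ### Haar measure and the column of `Oᵀ J O` -/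

instance matrixBorelSpace (n : ℕ) : BorelSpace (Matrix (Fin n) (Fin n) ℝ) :=
  inferInstanceAs (BorelSpace (Fin n → Fin n → ℝ))

instance orthogonalBorelSpace (n : ℕ) : BorelSpace (Matrix.orthogonalGroup (Fin n) ℝ) :=
  Subtype.borelSpace _

/-- The translate of `μ` by right multiplication is again a Haar probability measure, hence equals
`μ` by uniqueness. -/
lemma haar_right_invariant (n : ℕ) (μ : Measure (Matrix.orthogonalGroup (Fin n) ℝ))
    [μ.IsHaarMeasure] [IsProbabilityMeasure μ] (R : Matrix.orthogonalGroup (Fin n) ℝ) :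
    MeasurePreserving (fun O => O * R) μ μ := by
  have hcl : IsClosed (Matrix.orthogonalGroup (Fin n) ℝ : Set (Matrix (Fin n) (Fin n) ℝ)) :=
    isClosed_unitary
  have : LocallyCompactSpace (Matrix (Fin n) (Fin n) ℝ) :=
    inferInstanceAs (LocallyCompactSpace (Fin n → Fin n → ℝ))
  have : LocallyCompactSpace (Matrix.orthogonalGroup (Fin n) ℝ) :=
    hcl.isClosedEmbedding_subtypeVal.locallyCompactSpace
  have hmeas : Measurable (fun O : Matrix.orthogonalGroup (Fin n) ℝ => O * R) :=
    (continuous_mul_const R).measurable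
  have : IsProbabilityMeasure (μ.map (fun O => O * R)) :=
    Measure.isProbabilityMeasure_map hmeas.aemeasurable
  exact ⟨hmeas, Measure.isHaarMeasure_eq_of_isProbabilityMeasure _ _⟩

lemma measurable_orthogonal_entry (n : ℕ) (i j : Fin n) :
    Measurable fun O : Matrix.orthogonalGroup (Fin n) ℝ =>
      (O : Matrix (Fin n) (Fin n) ℝ) i j :=
  (measurable_pi_apply j).comp ((measurable_pi_apply i).comp measurable_subtype_coe)

/-- The skew-symmetric matrix `Oᵀ J O`; its entry `(i, j)` is the pairing `cᵢᵀ J cⱼ` of the columns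
of `O`. -/
noncomputable def conjJ (m : ℕ) (O : Matrix (Fin (2 * m)) (Fin (2 * m)) ℝ) :
    Matrix (Fin (2 * m)) (Fin (2 * m)) ℝ := Oᵀ * sympJ m ℝ * O

lemma conjJ_diag (m : ℕ) (O : Matrix (Fin (2 * m)) (Fin (2 * m)) ℝ) (i : Fin (2 * m)) :
    conjJ m O i i = 0 := by
  have h : (conjJ m O)ᵀ = - conjJ m O := by
    simp [conjJ, transpose_mul, sympJ_transpose, Matrix.mul_assoc]
  have := congrFun (congrFun h i) i
  simp only [transpose_apply, Matrix.neg_apply] at this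
  linarith

lemma conjJ_col_unit (m : ℕ) (O : Matrix.orthogonalGroup (Fin (2 * m)) ℝ) (i : Fin (2 * m)) :
    (fun k => conjJ m O k i) ⬝ᵥ (fun k => conjJ m O k i) = 1 := by
  have hO : (O : Matrix (Fin (2 * m)) (Fin (2 * m)) ℝ) * (O : Matrix _ _ ℝ)ᵀ = 1 :=
    (mem_orthogonalGroup_iff _ _).1 O.2
  have hO' : (O : Matrix (Fin (2 * m)) (Fin (2 * m)) ℝ)ᵀ * (O : Matrix _ _ ℝ) = 1 :=
    (mem_orthogonalGroup_iff' _ _).1 O.2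
  have h : (conjJ m O)ᵀ * conjJ m O = 1 := by
    simp only [conjJ, transpose_mul, sympJ_transpose, transpose_transpose]
    calc _ = (O : Matrix (Fin (2 * m)) (Fin (2 * m)) ℝ)ᵀ * (-sympJ m ℝ *
          ((O : Matrix _ _ ℝ) * (O : Matrix _ _ ℝ)ᵀ) * sympJ m ℝ) * (O : Matrix _ _ ℝ) := by
            simp only [Matrix.mul_assoc]
      _ = 1 := by simp [hO, sympJ_mul_self, hO']
  have := congrFun (congrFun h i) i
  rw [one_apply_eq] at this
  rw [← this]
  rfl

/-- If a reflection `R` fixes `e_i`, then `O ↦ O R` acts on the `i`-th column of `Oᵀ J O`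
by `R`. -/
lemma conjJ_col_mul (m : ℕ) (O R : Matrix (Fin (2 * m)) (Fin (2 * m)) ℝ) (i : Fin (2 * m))
    (hRt : Rᵀ = R) (hR : R *ᵥ Pi.single i 1 = Pi.single i 1) :
    (fun k => conjJ m (O * R) k i) = R *ᵥ (fun k => conjJ m O k i) := by
  have e : conjJ m (O * R) = R * (conjJ m O * R) := by
    simp only [conjJ, transpose_mul, hRt, Matrix.mul_assoc]
  have hcol : ∀ M : Matrix (Fin (2 * m)) (Fin (2 * m)) ℝ,
      (fun k => M k i) = M *ᵥ (Pi.single i 1) := fun M => by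
    rw [mulVec_single_one]; rfl
  rw [hcol, hcol, e, ← mulVec_mulVec, ← mulVec_mulVec, hR]

/-- An off-diagonal entry of `Oᵀ J O`: its column `i₀`, with the vanishing diagonal entry removed, is
a unit vector in dimension `2m - 1` whose law is invariant under the stabilizer of `e_{i₀}`. -/
lemma conjJ_column_law (m : ℕ) (hm : 2 ≤ m)
    (μ : Measure (Matrix.orthogonalGroup (Fin (2 * m)) ℝ))
    [μ.IsHaarMeasure] [IsProbabilityMeasure μ] (i₀ y : Fin (2 * m)) (hy : y ≠ i₀)
    (t : ℝ) (ht1 : t ≤ 1) :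
    (μ {O | (conjJ m O y i₀) ^ 2 ≤ t}).toReal =
      (∫ s in Set.Ioo (0 : ℝ) t,
              s ^ (-(1 : ℝ) / 2) * (1 - s) ^ ((2 * (m : ℝ) - 4) / 2))
            / betaFun (1 / 2) ((2 * (m : ℝ) - 2) / 2) := by
  have hcardN : Fintype.card {j : Fin (2 * m) // j ≠ i₀} = 2 * m - 1 := by
    rw [Fintype.card_subtype_compl, Fintype.card_subtype_eq, Fintype.card_fin]
  have hcard : (Fintype.card {j : Fin (2 * m) // j ≠ i₀} : ℝ) = 2 * m - 1 := by
    rw [hcardN, Nat.cast_sub (by omega)]; simp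
  have : Nontrivial {j : Fin (2 * m) // j ≠ i₀} :=
    Fintype.one_lt_card_iff_nontrivial.1 (by omega)
  let W : Matrix.orthogonalGroup (Fin (2 * m)) ℝ → {j : Fin (2 * m) // j ≠ i₀} → ℝ :=
    fun O j => conjJ m O j i₀
  have hentry := measurable_orthogonal_entry (2 * m)
  have hW : Measurable W := by
    refine measurable_pi_lambda _ fun j => ?_
    simp only [W, conjJ, Matrix.mul_apply, transpose_apply]
    exact Finset.measurable_fun_sum _ fun k _ => (Finset.measurable_fun_sum _ fun l _ =>
      (hentry l j).mul_const _).mul (hentry k i₀)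
  have hunit : ∀ O, W O ⬝ᵥ W O = 1 := by
    intro O
    rw [← conjJ_col_unit m O i₀]
    simp only [dotProduct]
    rw [Fintype.sum_eq_add_sum_subtype_ne _ i₀, conjJ_diag]
    simp [W]
  have hinv : ∀ v : {j : Fin (2 * m) // j ≠ i₀} → ℝ, v ⬝ᵥ v = 1 → ∀ t : ℝ,
      μ {O | (v ⬝ᵥ W O) ^ 2 ≤ t} = μ {O | (W O ⟨y, hy⟩) ^ 2 ≤ t} := by
    intro v hv t
    -- extension of `v` by zero at `i₀`; the reflection carrying it to `e_y` then fixes `e_{i₀}`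
    let v' : Fin (2 * m) → ℝ := fun j => if h : j ≠ i₀ then v ⟨j, h⟩ else 0
    have hv'dot : ∀ z : Fin (2 * m) → ℝ, v' ⬝ᵥ z = v ⬝ᵥ (fun j => z j) := by
      intro z
      simp only [dotProduct]
      rw [Fintype.sum_eq_add_sum_subtype_ne _ i₀]
      simp only [v', ne_eq, not_true_eq_false, dite_false, zero_mul, zero_add]
      exact Finset.sum_congr rfl fun j _ => by rw [dif_pos j.2]
    have hv'1 : v' ⬝ᵥ v' = 1 := by
      rw [hv'dot, ← hv]
      congr 1
      ext j
      simp only [v']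
      rw [dif_pos j.2]
    obtain ⟨R, hRt, hRR, hRv, hRfix⟩ :=
      exists_reflection v' (Pi.single y 1) hv'1 (by simp)
    have hR0 : R *ᵥ (Pi.single i₀ 1) = Pi.single i₀ 1 := by
      apply hRfix
      · rw [single_dotProduct]; simp [v']
      · rw [single_dotProduct]; simp [hy.symm]
    let R' : Matrix.orthogonalGroup (Fin (2 * m)) ℝ :=
      ⟨R, (mem_orthogonalGroup_iff _ _).2 (by rw [hRt, hRR])⟩
    have hset : MeasurableSet {O | (v ⬝ᵥ W O) ^ 2 ≤ t} := by
      refine measurableSet_le ?_ measurable_const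
      simp only [dotProduct]
      fun_prop
    rw [← (haar_right_invariant _ μ R').measure_preimage hset.nullMeasurableSet]
    congr 1
    ext O
    have hcol : (fun k => conjJ m (O * R' : Matrix.orthogonalGroup (Fin (2 * m)) ℝ) k i₀) =
        R *ᵥ (fun k => conjJ m O k i₀) :=
      conjJ_col_mul m O R i₀ hRt hR0
    have e2 : v ⬝ᵥ W (O * R') = W O ⟨y, hy⟩ := by
      have h1 := hv'dot (fun k => conjJ m (O * R' : Matrix.orthogonalGroup (Fin (2 * m)) ℝ) k i₀)
      change _ = v ⬝ᵥ W (O * R') at h1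
      rw [← h1, hcol, dotProduct_mulVec, ← mulVec_transpose, hRt, hRv, single_dotProduct, one_mul]
    simp only [Set.mem_preimage, Set.mem_ofPred_eq, e2]
  have hlaw := law_of_invariant_unit_vector μ W hW hunit ⟨y, hy⟩ hinv t ht1
  rw [hcard, show (2 * (m : ℝ) - 1 - 3) / 2 = (2 * (m : ℝ) - 4) / 2 by ring,
    show (2 * (m : ℝ) - 1 - 1) / 2 = (2 * (m : ℝ) - 2) / 2 by ring] at hlaw
  exact hlaw

/-- Let `d = 2m ≥ 4` be even, `J` the canonical symplectic form, and
`S(O) = J Oᵀ J O` for `O` real orthogonal. Then (i) `S(O)_{m,0} = 0` for every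
`O ∈ O(d)`, and (ii) for every index `x ≠ m`, under Haar measure on `O(d)` the variable
`(S(O)_{x,0})²` is `Beta(1/2, (d−2)/2)`-distributed: its CDF at `t ∈ [0,1]` is
`(∫₀ᵗ s^{−1/2}(1−s)^{(d−4)/2} ds)/B(1/2, (d−2)/2)`. -/
theorem haar_orthogonal_DIII_column_entries
    (m : ℕ) (hm : 2 ≤ m)
    (μ : Measure (Matrix.orthogonalGroup (Fin (2 * m)) ℝ))
    [μ.IsHaarMeasure] [IsProbabilityMeasure μ] :
    (∀ O : Matrix.orthogonalGroup (Fin (2 * m)) ℝ,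
      (sympJ m ℝ * (O : Matrix (Fin (2 * m)) (Fin (2 * m)) ℝ)ᵀ * sympJ m ℝ *
          (O : Matrix (Fin (2 * m)) (Fin (2 * m)) ℝ)) ⟨m, by omega⟩ ⟨0, by omega⟩ = 0) ∧
    (∀ x : Fin (2 * m), x ≠ ⟨m, by omega⟩ → ∀ t : ℝ, 0 ≤ t → t ≤ 1 →
      (μ {O : Matrix.orthogonalGroup (Fin (2 * m)) ℝ |
          ((sympJ m ℝ * (O : Matrix (Fin (2 * m)) (Fin (2 * m)) ℝ)ᵀ * sympJ m ℝ *
              (O : Matrix (Fin (2 * m)) (Fin (2 * m)) ℝ)) x ⟨0, by omega⟩) ^ 2 ≤ t}).toReal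
        = (∫ s in Set.Ioo (0 : ℝ) t,
              s ^ (-(1 : ℝ) / 2) * (1 - s) ^ ((2 * (m : ℝ) - 4) / 2))
            / betaFun (1 / 2) ((2 * (m : ℝ) - 2) / 2)) := by
  have hassoc : ∀ O : Matrix.orthogonalGroup (Fin (2 * m)) ℝ,
      sympJ m ℝ * (O : Matrix (Fin (2 * m)) (Fin (2 * m)) ℝ)ᵀ * sympJ m ℝ *
        (O : Matrix (Fin (2 * m)) (Fin (2 * m)) ℝ) = sympJ m ℝ * conjJ m O := fun O => by
    simp only [conjJ, Matrix.mul_assoc]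
  refine ⟨fun O => ?_, fun x hx t _ ht1 => ?_⟩
  · rw [hassoc, sympJ_row_partner m _ ⟨0, by omega⟩ rfl rfl, conjJ_diag, neg_zero]
  · obtain ⟨y, hy, hrow⟩ := sympJ_row m x _ ⟨0, by omega⟩ rfl rfl hx
    simp only [hassoc, hrow]
    exact conjJ_column_law m hm μ _ y hy t ht1
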